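/- Preservation for remove (the E-Remove case of Theorem 1): if Γ ⊨ σ, the statement y.remove() type checks under Γ by rule T-Remove (with c the AST counter of y.remove(), for every (w : τw) ∈ Γ the implication from the refinement of τw[w/self] to the refinement of τw[w/self][(len(y)−1)/len(y), (c+1)/c] is valid), σ(y) is a nonempty list, and ⟨σ, y.remove()⟩ → ⟨σ', skip⟩ by rule E-Remove (σ' is σ with the last element of the list σ(y) removed and with c incremented), then Γ ⊨ σ'. -/

import Mathlib

namespace QuantmBound

/-! ## Base types and values of the core calculus (paper Fig. 2) -/

/-- Base types: `int`, `bool`, `Iterator⟨β⟩`, `List⟨β⟩`. -/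
inductive BaseTy : Type
  | int
  | bool
  | iterator (β : BaseTy)
  | list (β : BaseTy)
  deriving DecidableEq

/-- Runtime values: integers, booleans, iterator values `iter(i, y)`
    and list values `[v₁,…,vₙ]`. -/
inductive Val : Type
  | int (n : ℤ)
  | bool (b : Bool)
  | iter (i : ℕ) (y : String)
  | list (l : List Val)

def Val.asInt : Val → ℤ
  | .int n => n
  | _ => 0

def Val.asBool : Val → Bool
  | .bool b => b
  | _ => false

/-- The length of a list value. -/
def Val.lenZ : Val → ℤ
  | .list l => (l.length : ℤ)
  | _ => 0

/-- The current index of an iterator value. -/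
def Val.idxZ : Val → ℤ
  | .iter i _ => (i : ℤ)
  | _ => 0

/-- Conformance of a value to a base type. -/
inductive ValHasBase : Val → BaseTy → Prop
  | int (n : ℤ) : ValHasBase (.int n) .int
  | bool (b : Bool) : ValHasBase (.bool b) .bool
  | iter (i : ℕ) (y : String) (β : BaseTy) : ValHasBase (.iter i y) (.iterator β)
  | list (l : List Val) (β : BaseTy) :
      (∀ v ∈ l, ValHasBase v β) → ValHasBase (.list l) (.list β)

/-! ## Expressions and statements -/

/-- Arithmetic operators `⊕`. -/
inductive AOp : Type
  | add | sub | mul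
  deriving DecidableEq

def AOp.eval : AOp → ℤ → ℤ → ℤ
  | .add, a, b => a + b
  | .sub, a, b => a - b
  | .mul, a, b => a * b

/-- Comparison operators `⋈`. -/
inductive COp : Type
  | eq | le | lt
  deriving DecidableEq

def COp.holds : COp → ℤ → ℤ → Prop
  | .eq, a, b => a = b
  | .le, a, b => a ≤ b
  | .lt, a, b => a < b

def COp.evalB : COp → ℤ → ℤ → Bool
  | .eq, a, b => a == b
  | .le, a, b => decide (a ≤ b)
  | .lt, a, b => decide (a < b)

/-- Expressions of the core calculus. -/
inductive Expr : Type
  | int (n : ℤ)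
  | bool (b : Bool)
  | var (x : String)
  | iterator (y : String)          -- y.iterator()
  | newList (β : BaseTy)           -- new List⟨β⟩
  | arith (op : AOp) (e₁ e₂ : Expr)
  | comp (op : COp) (e₁ e₂ : Expr)
  | or (e₁ e₂ : Expr)
  | not (e : Expr)

/-- Statements.  Each statement carries its associated AST counter;
    `none` stands for the special ignored counter ⊥ used for auxiliary
    statements introduced during evaluation. -/
inductive Stmt : Type
  | assign (c : Option ℕ) (x : String) (e : Expr)     -- x = e
  | next (c : Option ℕ) (x z : String)                -- x = z.next()
  | remove (c : Option ℕ) (y : String)                -- y.remove()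
  | add (c : Option ℕ) (y x : String)                 -- y.add(x)
  | skip
  | block (c : Option ℕ) (ss : List Stmt)             -- { s₁; …; sₙ }
  | ite (c : Option ℕ) (e : Expr) (s₁ s₂ : Stmt)      -- if e then s₁ else s₂
  | whileLoop (c : Option ℕ) (e : Expr) (s : Stmt)    -- while e do s

/-- The AST counter associated with a statement (`getCnt`). -/
def Stmt.cnt : Stmt → Option ℕ
  | .assign c _ _ => c
  | .next c _ _ => c
  | .remove c _ => c
  | .add c _ _ => c
  | .skip => none
  | .block c _ => c
  | .ite c _ _ _ => c
  | .whileLoop c _ _ => c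

/-- Replace the top-level AST counter of a statement (used for the
    `newcnt`/⊥-marking of auxiliary statements). -/
def Stmt.setCnt (c : Option ℕ) : Stmt → Stmt
  | .assign _ x e => .assign c x e
  | .next _ x z => .next c x z
  | .remove _ y => .remove c y
  | .add _ y x => .add c y x
  | .skip => .skip
  | .block _ ss => .block c ss
  | .ite _ e s₁ s₂ => .ite c e s₁ s₂
  | .whileLoop _ e s => .whileLoop c e s

/-! ## Environments -/

/-- An environment maps program variables to values and AST counters to ℕ. -/
structure Env : Type where
  vars : String → Val
  cnt : ℕ → ℕ

def Env.setVar (σ : Env) (x : String) (v : Val) : Env :=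
  { σ with vars := Function.update σ.vars x v }

/-- Increment the given AST counter (a no-op for the ignored counter ⊥). -/
def Env.bump (σ : Env) : Option ℕ → Env
  | none => σ
  | some c => { σ with cnt := Function.update σ.cnt c (σ.cnt c + 1) }

/-! ## Operational semantics (paper Fig. 3) -/

/-- Evaluation of (side-effect free) expressions, `σ ⊢ e ⇓* v`. -/
inductive EvalExpr (σ : Env) : Expr → Val → Prop
  | int (n : ℤ) : EvalExpr σ (.int n) (.int n)
  | bool (b : Bool) : EvalExpr σ (.bool b) (.bool b)
  | var (x : String) : EvalExpr σ (.var x) (σ.vars x)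
  | iterator (y : String) : EvalExpr σ (.iterator y) (.iter 0 y)
  | newList (β : BaseTy) : EvalExpr σ (.newList β) (.list [])
  | arith {op : AOp} {e₁ e₂ : Expr} {n₁ n₂ : ℤ} :
      EvalExpr σ e₁ (.int n₁) → EvalExpr σ e₂ (.int n₂) →
      EvalExpr σ (.arith op e₁ e₂) (.int (op.eval n₁ n₂))
  | comp {op : COp} {e₁ e₂ : Expr} {n₁ n₂ : ℤ} :
      EvalExpr σ e₁ (.int n₁) → EvalExpr σ e₂ (.int n₂) →
      EvalExpr σ (.comp op e₁ e₂) (.bool (op.evalB n₁ n₂))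
  | or {e₁ e₂ : Expr} {b₁ b₂ : Bool} :
      EvalExpr σ e₁ (.bool b₁) → EvalExpr σ e₂ (.bool b₂) →
      EvalExpr σ (.or e₁ e₂) (.bool (b₁ || b₂))
  | not {e : Expr} {b : Bool} :
      EvalExpr σ e (.bool b) → EvalExpr σ (.not e) (.bool (!b))

/-- Small-step operational semantics `⟨σ, s⟩ → ⟨σ', s'⟩`.  Every step
    increments the AST counter of the statement being executed; auxiliary
    statements introduced during evaluation are marked with ⊥ (`none`). -/
inductive Step : Env → Stmt → Env → Stmt → Prop
  | assign {σ : Env} {c : Option ℕ} {x : String} {e : Expr} {v : Val} :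
      EvalExpr σ e v →
      Step σ (.assign c x e) ((σ.bump c).setVar x v) .skip
  | next {σ : Env} {c : Option ℕ} {x z y : String} {i : ℕ} {vs : List Val} :
      σ.vars z = .iter i y → σ.vars y = .list vs → i < vs.length - 1 →
      Step σ (.next c x z)
        ((((σ.bump c).setVar z (.iter (i + 1) y)).setVar x (vs.getD i (.int 0)))) .skip
  | remove {σ : Env} {c : Option ℕ} {y : String} {vs : List Val} {v : Val} :
      σ.vars y = .list (vs ++ [v]) →
      Step σ (.remove c y) ((σ.bump c).setVar y (.list vs)) .skip
  | add {σ : Env} {c : Option ℕ} {y x : String} {vs : List Val} :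
      σ.vars y = .list vs →
      Step σ (.add c y x) ((σ.bump c).setVar y (.list (vs ++ [σ.vars x]))) .skip
  | ifTrue {σ : Env} {c : Option ℕ} {e : Expr} {s₁ s₂ : Stmt} :
      EvalExpr σ e (.bool true) →
      Step σ (.ite c e s₁ s₂) (σ.bump c) s₁
  | ifFalse {σ : Env} {c : Option ℕ} {e : Expr} {s₁ s₂ : Stmt} :
      EvalExpr σ e (.bool false) →
      Step σ (.ite c e s₁ s₂) (σ.bump c) s₂
  | whileUnfold {σ : Env} {c : Option ℕ} {e : Expr} {s : Stmt} :
      Step σ (.whileLoop c e s) (σ.bump c)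
        (.ite none e (.block none [s, .whileLoop none e s]) .skip)
  | blockStep {σ σ' : Env} {c : Option ℕ} {s₁ s₁' : Stmt} {ss : List Stmt} :
      Step (σ.bump c) s₁ σ' s₁' →
      Step σ (.block c (s₁ :: ss)) σ' (.block none (s₁'.setCnt none :: ss))
  | blockSkip {σ : Env} {c : Option ℕ} {ss : List Stmt} :
      Step σ (.block c (.skip :: ss)) σ (.block none ss)

/-- Reflexive-transitive closure of the step relation, `⟨σ, s⟩ →* ⟨σ', s'⟩`. -/
inductive Steps : Env → Stmt → Env → Stmt → Prop
  | refl (σ : Env) (s : Stmt) : Steps σ s σ s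
  | tail {σ σ' σ'' : Env} {s s' s'' : Stmt} :
      Steps σ s σ' s' → Step σ' s' σ'' s'' → Steps σ s σ'' s''

/-! ## Refinements (paper Fig. 2b and Fig. 4) -/

/-- Refinement expressions: integer constants, `self`, integer variables,
    `len` of a list expression (`none` = self), `idx` of an iterator
    expression (`none` = self), AST counter variables, and linear arithmetic. -/
inductive RefExpr : Type
  | int (n : ℤ)
  | selfI                        -- self (as an integer)
  | var (x : String)
  | len (l : Option String)      -- len(self) / len(x)
  | idx (it : Option String)     -- idx(self) / idx(x)
  | cnt (c : ℕ)
  | add (e₁ e₂ : RefExpr)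
  | sub (e₁ e₂ : RefExpr)

/-- Refinements: boolean constants, boolean variables, `iterOf(y)`,
    comparisons, disjunction and negation. -/
inductive Refinement : Type
  | bool (b : Bool)
  | bvar (x : String)
  | iterOf (y : String)
  | comp (op : COp) (e₁ e₂ : RefExpr)
  | or (r₁ r₂ : Refinement)
  | not (r : Refinement)

/-- Evaluation of a refinement expression in environment `σ`, where the
    variable `x` interprets `self`. -/
def RefExpr.eval (σ : Env) (x : String) : RefExpr → ℤ
  | .int n => n
  | .selfI => (σ.vars x).asInt
  | .var y => (σ.vars y).asInt
  | .len none => (σ.vars x).lenZ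
  | .len (some y) => (σ.vars y).lenZ
  | .idx none => (σ.vars x).idxZ
  | .idx (some z) => (σ.vars z).idxZ
  | .cnt c => (σ.cnt c : ℤ)
  | .add e₁ e₂ => e₁.eval σ x + e₂.eval σ x
  | .sub e₁ e₂ => e₁.eval σ x - e₂.eval σ x

/-- Satisfaction `σ ⊨ (r, x)` (paper Fig. 4): variable `x` interprets `self`. -/
def RSat (σ : Env) (x : String) : Refinement → Prop
  | .bool b => b = true
  | .bvar y => (σ.vars y).asBool = true
  | .iterOf y => ∃ i : ℕ, σ.vars x = .iter i y
  | .comp op e₁ e₂ => op.holds (e₁.eval σ x) (e₂.eval σ x)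
  | .or r₁ r₂ => RSat σ x r₁ ∨ RSat σ x r₂
  | .not r => ¬ RSat σ x r

/-! ## Substitutions on refinements -/

/-- Apply a map to the atoms of a refinement expression. -/
def RefExpr.mapAtoms (f : RefExpr → RefExpr) : RefExpr → RefExpr
  | .add e₁ e₂ => .add (e₁.mapAtoms f) (e₂.mapAtoms f)
  | .sub e₁ e₂ => .sub (e₁.mapAtoms f) (e₂.mapAtoms f)
  | e => f e

/-- Map over a refinement: `fa` transforms refinement-expression atoms,
    `fb` boolean variables, `fi` `iterOf` predicates. -/
def Refinement.map (fa : RefExpr → RefExpr) (fb : String → Refinement)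
    (fi : String → Refinement) : Refinement → Refinement
  | .bool b => .bool b
  | .bvar y => fb y
  | .iterOf y => fi y
  | .comp op e₁ e₂ => .comp op (e₁.mapAtoms fa) (e₂.mapAtoms fa)
  | .or r₁ r₂ => .or (r₁.map fa fb fi) (r₂.map fa fb fi)
  | .not r => .not (r.map fa fb fi)

/-- Map only the refinement-expression atoms of a refinement. -/
def Refinement.mapE (fa : RefExpr → RefExpr) (r : Refinement) : Refinement :=
  r.map fa .bvar .iterOf

/-- The substitution `[w/self]` on refinement-expression atoms. -/
def aSelf (w : String) : RefExpr → RefExpr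
  | .selfI => .var w
  | .len none => .len (some w)
  | .idx none => .idx (some w)
  | e => e

/-- The substitution `r[w/self]`. -/
def Refinement.applySelf (w : String) (r : Refinement) : Refinement :=
  r.mapE (aSelf w)

/-- The substitution `[(c+1)/c]` on atoms. -/
def aBump (c : ℕ) : RefExpr → RefExpr
  | .cnt c' => if c' = c then .add (.cnt c) (.int 1) else .cnt c'
  | e => e

def aBumpO : Option ℕ → RefExpr → RefExpr
  | none => id
  | some c => aBump c

/-- The substitution `[(len(y)+d)/len(y)]` on atoms. -/
def aLenShift (y : String) (d : ℤ) : RefExpr → RefExpr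
  | .len (some y') => if y' = y then .add (.len (some y)) (.int d) else .len (some y')
  | e => e

/-- The substitution `[e'/len(y)]` on atoms. -/
def aLenSet (y : String) (e' : RefExpr) : RefExpr → RefExpr
  | .len (some y') => if y' = y then e' else .len (some y')
  | e => e

/-- The substitution `[0/idx(z)]` on atoms. -/
def aIdxSet0 (z : String) : RefExpr → RefExpr
  | .idx (some z') => if z' = z then .int 0 else .idx (some z')
  | e => e

/-- The substitution `[(idx(z)+1)/idx(z)]` on atoms. -/
def aIdxShift (z : String) : RefExpr → RefExpr
  | .idx (some z') => if z' = z then .add (.idx (some z)) (.int 1) else .idx (some z')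
  | e => e

/-- Translation of a program expression into a refinement expression. -/
def Expr.toRef : Expr → RefExpr
  | .int n => .int n
  | .var x => .var x
  | .arith .add e₁ e₂ => .add e₁.toRef e₂.toRef
  | .arith .sub e₁ e₂ => .sub e₁.toRef e₂.toRef
  | _ => .int 0

/-- The substitution `[e/x]` on atoms (for `T-Assign`): `x` becomes `e`
    and `idx(x)` becomes `idx(e)`. -/
def aAssign (x : String) (e : Expr) : RefExpr → RefExpr
  | .var x' => if x' = x then e.toRef else .var x'
  | .idx (some x') =>
      if x' = x then (match e with | .var z => .idx (some z) | _ => .idx (some x)) else .idx (some x')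
  | a => a

/-- The substitution `[e/x]` on boolean variables. -/
def bAssign (x : String) (e : Expr) (x' : String) : Refinement :=
  if x' = x then
    match e with
    | .var z => .bvar z
    | .bool b => .bool b
    | _ => .bvar x'
  else .bvar x'

/-- The substitution `[(len(y)+1)/len(y), (c+1)/c]` of rule `T-Add`. -/
def addSubst (y : String) (c : Option ℕ) (r : Refinement) : Refinement :=
  r.mapE (fun a => aBumpO c (aLenShift y 1 a))

/-- The substitution `[(len(y)−1)/len(y), (c+1)/c]` of rule `T-Remove`. -/
def removeSubst (y : String) (c : Option ℕ) (r : Refinement) : Refinement :=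
  r.mapE (fun a => aBumpO c (aLenShift y (-1) a))

/-- The substitution `[(idx(z)+1)/idx(z), (c+1)/c]` of rule `T-Next`. -/
def nextSubst (z : String) (c : Option ℕ) (r : Refinement) : Refinement :=
  r.mapE (fun a => aBumpO c (aIdxShift z a))

/-- The substitution `[0/idx(z), (c+1)/c]` of rule `T-AssignIter`. -/
def iterSubst (z : String) (c : Option ℕ) (r : Refinement) : Refinement :=
  r.mapE (fun a => aBumpO c (aIdxSet0 z a))

/-- The substitution `[0/len(x), (c+1)/c]` of rule `T-AssignNewList`. -/
def newListSubst (x : String) (c : Option ℕ) (r : Refinement) : Refinement :=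
  r.mapE (fun a => aBumpO c (aLenSet x (.int 0) a))

/-- `len(e)` for a list-typed program expression. -/
def lenRef : Expr → RefExpr
  | .var y => .len (some y)
  | _ => .int 0

/-- The substitution `[len(e)/len(x), (c+1)/c]` of rule `T-AssignList`. -/
def assignListSubst (x : String) (e : Expr) (c : Option ℕ) (r : Refinement) : Refinement :=
  r.mapE (fun a => aBumpO c (aLenSet x (lenRef e) a))

/-- The substitution `[e/x, (c+1)/c]` of rule `T-Assign`. -/
def assignSubst (x : String) (e : Expr) (c : Option ℕ) (r : Refinement) : Refinement :=
  r.map (fun a => aBumpO c (aAssign x e a)) (bAssign x e) .iterOf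

/-- The substitution `[(c+1)/c]` of rule `T-Counter`. -/
def cntSubst (c : Option ℕ) (r : Refinement) : Refinement :=
  r.mapE (aBumpO c)

/-- The substitution `[iterOf(y)/iterOf(*)]` of rule `T-AssignIter`. -/
def iterWild (y : String) (r : Refinement) : Refinement :=
  r.map id .bvar (fun _ => .iterOf y)

/-! ## Refinement types, contexts and type checking (paper Fig. 5) -/

/-- A refinement type `{β | r}`. -/
structure RTy : Type where
  base : BaseTy
  ref : Refinement

/-- A typing context maps variables to refinement types. -/
def Ctx : Type := String → Option RTy

/-- `Γ ⊨ σ`: every variable conforms to its base type and refinement. -/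
def WellTyped (Γ : Ctx) (σ : Env) : Prop :=
  ∀ x τ, Γ x = some τ → ValHasBase (σ.vars x) τ.base ∧ RSat σ x τ.ref

/-- The subtyping premise used in the type-checking rules: for every
    `(w : τ_w) ∈ Γ` the implication from the refinement of `τ_w[w/self]` to
    the refinement of `f (τ_w[w/self])` is valid (holds in all environments). -/
def SubValid (Γ : Ctx) (f : Refinement → Refinement) : Prop :=
  ∀ w τ, Γ w = some τ → ∀ σ : Env,
    RSat σ w (τ.ref.applySelf w) → RSat σ w (f (τ.ref.applySelf w))

/-- `r` is logically equivalent to its existential quantification over `x`,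
    `r ⟺ ∃x. r` (premise of rule `T-Next`). -/
def ExistsEquiv (x : String) (r : Refinement) : Prop :=
  ∀ (σ : Env) (w : String), RSat σ w r ↔ ∃ v : Val, RSat (σ.setVar x v) w r

/-- The refinement type-checking judgment `Γ ⊢ s` of paper Fig. 5. -/
inductive TyCheck (Γ : Ctx) : Stmt → Prop
  | add {c : Option ℕ} {y x : String} :
      SubValid Γ (addSubst y c) →
      TyCheck Γ (.add c y x)
  | remove {c : Option ℕ} {y : String} :
      SubValid Γ (removeSubst y c) →
      TyCheck Γ (.remove c y)
  | next {c : Option ℕ} {x z : String} :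
      SubValid Γ (nextSubst z c) →
      (∀ w τ, Γ w = some τ → ExistsEquiv x τ.ref) →
      TyCheck Γ (.next c x z)
  | assignIter {c : Option ℕ} {z y : String} {τz : RTy} :
      Γ z = some τz →
      SubValid Γ (iterSubst z c) →
      (∀ σ : Env, RSat σ z (τz.ref.applySelf z) →
        RSat σ z (iterWild y (iterSubst z c (τz.ref.applySelf z)))) →
      TyCheck Γ (.assign c z (.iterator y))
  | assignNewList {c : Option ℕ} {x : String} {β : BaseTy} :
      SubValid Γ (newListSubst x c) →
      TyCheck Γ (.assign c x (.newList β))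
  | assign {c : Option ℕ} {x : String} {e : Expr} {τx : RTy} :
      Γ x = some τx →
      (∀ β, τx.base ≠ .list β) →
      (∀ y, e ≠ .iterator y) → (∀ β, e ≠ .newList β) →
      SubValid Γ (assignSubst x e c) →
      TyCheck Γ (.assign c x e)
  | assignList {c : Option ℕ} {x : String} {e : Expr} {τx : RTy} {β : BaseTy} :
      Γ x = some τx →
      τx.base = .list β →
      (∀ y, e ≠ .iterator y) → (∀ β', e ≠ .newList β') →
      SubValid Γ (assignListSubst x e c) →
      TyCheck Γ (.assign c x e)
  | skip : TyCheck Γ .skip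
  | block {c : Option ℕ} {ss : List Stmt} :
      SubValid Γ (cntSubst c) →
      (∀ s ∈ ss, TyCheck Γ s) →
      TyCheck Γ (.block c ss)
  | ite {c : Option ℕ} {e : Expr} {s₁ s₂ : Stmt} :
      SubValid Γ (cntSubst c) →
      TyCheck Γ s₁ → TyCheck Γ s₂ →
      TyCheck Γ (.ite c e s₁ s₂)
  | whileLoop {c : Option ℕ} {e : Expr} {s : Stmt} :
      SubValid Γ (cntSubst c) →
      TyCheck Γ s →
      TyCheck Γ (.whileLoop c e s)

/-! ## Methods, initial environments, reachability -/

/-- A method: input declarations `τ u`, initialized local declarations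
    `τ x = e`, and a body. -/
structure Method : Type where
  inputs : List (String × RTy)
  locals : List (String × RTy × Expr)
  body : Stmt

/-- The typing context induced by the declarations of a method. -/
def Method.ctx (M : Method) : Ctx := fun x =>
  (M.inputs ++ M.locals.map (fun p => (p.1, p.2.1))).lookup x

/-- `σ₀` is an initial environment of `M`: all AST counters are zero,
    locals hold the values of their initializers, and the inputs satisfy
    their declared refinement types. -/
def Init (M : Method) (σ₀ : Env) : Prop :=
  (∀ c, σ₀.cnt c = 0) ∧
  (∀ p ∈ M.locals, EvalExpr σ₀ p.2.2 (σ₀.vars p.1)) ∧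
  (∀ p ∈ M.inputs, ValHasBase (σ₀.vars p.1) p.2.base ∧ RSat σ₀ p.1 p.2.ref)

/-- `σ ∈ Reach(M)`: `⟨σ_init, M⟩ →* ⟨σ, s⟩` for some statement `s`. -/
def Reach (M : Method) (σ : Env) : Prop :=
  ∃ σ₀ s, Init M σ₀ ∧ Steps σ₀ M.body σ s

/-- `Γ ⊢ M` (rule `T-Decl`): the body type checks under the declared
    context and the initial values of the locals conform to their types. -/
def MethodTyCheck (M : Method) : Prop :=
  TyCheck M.ctx M.body ∧
  ∀ σ₀, Init M σ₀ → ∀ p ∈ M.locals,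
    ValHasBase (σ₀.vars p.1) p.2.1.base ∧ RSat σ₀ p.1 p.2.1.ref

/-! ## AST counter axioms (paper Sec. 4.2) and constraint extraction (Fig. 6) -/

/-- Conjunction of refinements (encoded with `or`/`not`). -/
def rAnd (r₁ r₂ : Refinement) : Refinement := .not (.or (.not r₁) (.not r₂))

def rConj : List Refinement → Refinement
  | [] => .bool true
  | r :: rs => rAnd r (rConj rs)

/-- Axiom relating the counters of two consecutive statements of a block:
    `cᵢ = cᵢ₊₁ ∨ cᵢ = cᵢ₊₁ + 1`. -/
def adjAxiom (s₁ s₂ : Stmt) : Refinement :=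
  match s₁.cnt, s₂.cnt with
  | some c₁, some c₂ =>
      .or (.comp .eq (.cnt c₁) (.cnt c₂))
          (.comp .eq (.cnt c₁) (.add (.cnt c₂) (.int 1)))
  | _, _ => .bool true

def adjAxioms : List Stmt → Refinement
  | s₁ :: s₂ :: rest => rAnd (adjAxiom s₁ s₂) (adjAxioms (s₂ :: rest))
  | _ => .bool true

/-- Axiom `c₀ = c₁` relating a block's counter with its first statement's. -/
def headAxiom (c : Option ℕ) : List Stmt → Refinement
  | s₁ :: _ =>
      match c, s₁.cnt with
      | some c₀, some c₁ => .comp .eq (.cnt c₀) (.cnt c₁)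
      | _, _ => .bool true
  | [] => .bool true

/-- Axiom for conditionals: `c₀ = c₁ + c₂ ∨ c₀ = c₁ + c₂ + 1`. -/
def iteAxiom (c : Option ℕ) (s₁ s₂ : Stmt) : Refinement :=
  match c, s₁.cnt, s₂.cnt with
  | some c₀, some c₁, some c₂ =>
      .or (.comp .eq (.cnt c₀) (.add (.cnt c₁) (.cnt c₂)))
          (.comp .eq (.cnt c₀) (.add (.add (.cnt c₁) (.cnt c₂)) (.int 1)))
  | _, _, _ => .bool true

mutual
/-- The AST counter relation axioms `R(s)` of paper Sec. 4.2. -/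
def counterAxioms : Stmt → Refinement
  | .block c ss => rAnd (headAxiom c ss) (rAnd (adjAxioms ss) (counterAxiomsList ss))
  | .ite c _ s₁ s₂ => rAnd (iteAxiom c s₁ s₂) (rAnd (counterAxioms s₁) (counterAxioms s₂))
  | .whileLoop _ _ s => counterAxioms s
  | _ => .bool true

def counterAxiomsList : List Stmt → Refinement
  | [] => .bool true
  | s :: rest => rAnd (counterAxioms s) (counterAxiomsList rest)
end

/-- The helper function `Φ(x : τ)` of paper Fig. 6, extracting the
    refinement constraint of a type with `x` substituted for `self`
    (with `iterOf(y)` yielding `0 ≤ idx(x) ≤ len(y)`). -/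
def Phi (x : String) (τ : RTy) : Refinement :=
  match τ.ref with
  | .iterOf y =>
      rAnd (.comp .le (.int 0) (.idx (some x)))
           (.comp .le (.idx (some x)) (.len (some y)))
  | r => r.applySelf x

/-- `C_AST ∧ ⋀_{u:τ input} Φ(u:τ) ∧ ⋀_{x:τ local} Φ(x:τ)`. -/
def methodConstraint (M : Method) : Refinement :=
  rAnd (counterAxioms M.body)
    (rAnd (rConj (M.inputs.map fun p => Phi p.1 p.2))
          (rConj (M.locals.map fun p => Phi p.1 p.2.1)))

/-! ## Occurrence of statements in a method body -/

/-- `Occurs s t`: `s` occurs in (is a reflexive-transitive AST sub-node of) `t`. -/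
inductive Occurs : Stmt → Stmt → Prop
  | refl (s : Stmt) : Occurs s s
  | block {s s' : Stmt} {c : Option ℕ} {ss : List Stmt} :
      s' ∈ ss → Occurs s s' → Occurs s (.block c ss)
  | iteLeft {s : Stmt} {c : Option ℕ} {e : Expr} {s₁ s₂ : Stmt} :
      Occurs s s₁ → Occurs s (.ite c e s₁ s₂)
  | iteRight {s : Stmt} {c : Option ℕ} {e : Expr} {s₁ s₂ : Stmt} :
      Occurs s s₂ → Occurs s (.ite c e s₁ s₂)
  | whileBody {s : Stmt} {c : Option ℕ} {e : Expr} {b : Stmt} :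
      Occurs s b → Occurs s (.whileLoop c e b)

/-- `OccursOutsideLoops s t`: `s` occurs in `t` without being (transitively)
    contained in any while loop. -/
inductive OccursOutsideLoops : Stmt → Stmt → Prop
  | refl (s : Stmt) : OccursOutsideLoops s s
  | block {s s' : Stmt} {c : Option ℕ} {ss : List Stmt} :
      s' ∈ ss → OccursOutsideLoops s s' → OccursOutsideLoops s (.block c ss)
  | iteLeft {s : Stmt} {c : Option ℕ} {e : Expr} {s₁ s₂ : Stmt} :
      OccursOutsideLoops s s₁ → OccursOutsideLoops s (.ite c e s₁ s₂)
  | iteRight {s : Stmt} {c : Option ℕ} {e : Expr} {s₁ s₂ : Stmt} :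
      OccursOutsideLoops s s₂ → OccursOutsideLoops s (.ite c e s₁ s₂)

mutual
/-- All AST counters occurring in a statement. -/
def Stmt.counters : Stmt → List ℕ
  | .block c ss => c.toList ++ countersList ss
  | .ite c _ s₁ s₂ => c.toList ++ s₁.counters ++ s₂.counters
  | .whileLoop c _ s => c.toList ++ s.counters
  | s => s.cnt.toList

def countersList : List Stmt → List ℕ
  | [] => []
  | s :: rest => s.counters ++ countersList rest
end

/-- Well-formed counter assignment: every AST node of the method body has
    its own distinct counter. -/
def WFCounters (M : Method) : Prop := M.body.counters.Nodup

/-- Applying a substitution to every refinement in a typing context. -/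
def Ctx.mapRef (Γ : Ctx) (f : Refinement → Refinement) : Ctx :=
  fun x => (Γ x).map fun τ => ⟨τ.base, f τ.ref⟩

/-! Besides its own counter, `y.remove()` changes only the list stored in `y`, and a refinement
observes a list value through its length alone: on every list the integer, boolean and index
observations take their default value and `iterOf` fails. So a refinement holds after the step,
with `w` for `self`, exactly when its image under `[w/self]` followed by
`[(len(y)-1)/len(y), (c+1)/c]` holds before it, and the validity premise of the typing rule,
instantiated at the environment before the step, supplies the latter. -/

/-- The refinement expressions on which `RefExpr.mapAtoms f` acts as `f`, i.e. those that are
neither a sum nor a difference. -/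
def RefExpr.IsAtom : RefExpr → Prop
  | .add _ _ => False
  | .sub _ _ => False
  | _ => True

theorem RefExpr.eval_mapAtoms {f : RefExpr → RefExpr} {σ σ' : Env} {w : String}
    (hf : ∀ a : RefExpr, a.IsAtom → (f a).eval σ w = a.eval σ' w) (e : RefExpr) :
    (e.mapAtoms f).eval σ w = e.eval σ' w := by
  induction e with
  | add e₁ e₂ ih₁ ih₂ => simp only [mapAtoms, eval, ih₁, ih₂]
  | sub e₁ e₂ ih₁ ih₂ => simp only [mapAtoms, eval, ih₁, ih₂]
  | _ => exact hf _ trivial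

theorem RefExpr.mapAtoms_mapAtoms (f g : RefExpr → RefExpr) (e : RefExpr) :
    (e.mapAtoms f).mapAtoms g = e.mapAtoms fun a => (f a).mapAtoms g := by
  induction e with
  | add e₁ e₂ ih₁ ih₂ => simp only [mapAtoms, ih₁, ih₂]
  | sub e₁ e₂ ih₁ ih₂ => simp only [mapAtoms, ih₁, ih₂]
  | _ => rfl

theorem Refinement.mapE_mapE (f g : RefExpr → RefExpr) (r : Refinement) :
    (r.mapE f).mapE g = r.mapE fun a => (f a).mapAtoms g := by
  unfold mapE
  induction r with
  | comp op e₁ e₂ => simp only [map, RefExpr.mapAtoms_mapAtoms]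
  | or r₁ r₂ ih₁ ih₂ => simp only [map, ih₁, ih₂]
  | not r ih => simp only [map, ih]
  | _ => rfl

theorem rsat_mapE {f : RefExpr → RefExpr} {σ σ' : Env} {w : String}
    (hf : ∀ a : RefExpr, a.IsAtom → (f a).eval σ w = a.eval σ' w)
    (hbool : ∀ z, (σ.vars z).asBool = (σ'.vars z).asBool)
    (hiter : ∀ z, (∃ i, σ.vars w = .iter i z) ↔ ∃ i, σ'.vars w = .iter i z) (r : Refinement) :
    RSat σ w (r.mapE f) ↔ RSat σ' w r := by
  unfold Refinement.mapE
  induction r with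
  | bool b => rfl
  | bvar z => simp only [Refinement.map, RSat, hbool]
  | iterOf z => exact hiter z
  | comp op e₁ e₂ => simp only [Refinement.map, RSat, RefExpr.eval_mapAtoms hf]
  | or r₁ r₂ ih₁ ih₂ => simp only [Refinement.map, RSat, ih₁, ih₂]
  | not r ih => simp only [Refinement.map, RSat, ih]

theorem RefExpr.eval_aSelf (σ : Env) (w : String) (e : RefExpr) :
    (aSelf w e).eval σ w = e.eval σ w := by
  rcases e with _ | _ | _ | (_ | _) | (_ | _) | _ | _ | _ <;> rfl

theorem rsat_applySelf (σ : Env) (w : String) (r : Refinement) :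
    RSat σ w (r.applySelf w) ↔ RSat σ w r :=
  rsat_mapE (fun a _ => RefExpr.eval_aSelf σ w a) (fun _ => rfl) (fun _ => Iff.rfl) r

theorem WellTyped.of_subValid {Γ : Ctx} {σ σ' : Env} {f : Refinement → Refinement}
    (hwt : WellTyped Γ σ) (hsub : SubValid Γ f)
    (hbase : ∀ x β, ValHasBase (σ.vars x) β → ValHasBase (σ'.vars x) β)
    (hsubst : ∀ x r, RSat σ x (f (r.applySelf x)) → RSat σ' x r) :
    WellTyped Γ σ' := by
  intro x τ hx
  obtain ⟨hxbase, hxref⟩ := hwt x τ hx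
  exact ⟨hbase x _ hxbase, hsubst x _ (hsub x τ hx σ ((rsat_applySelf σ x τ.ref).2 hxref))⟩

theorem Env.vars_bump (σ : Env) (c : Option ℕ) : (σ.bump c).vars = σ.vars := by
  cases c <;> rfl

theorem Env.apply_vars_setVar {α : Sort*} (f : Val → α) {σ : Env} {y : String} {v : Val}
    (h : f (σ.vars y) = f v) (z : String) : f (σ.vars z) = f ((σ.setVar y v).vars z) := by
  obtain rfl | hz := eq_or_ne z y
  · simpa only [setVar, Function.update_self] using h
  · simp only [setVar, Function.update_of_ne hz]

/-- The atom substitution `[(len(y)+d)/len(y), (c+1)/c]`, shared by the rules `T-Add` (`d = 1`)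
and `T-Remove` (`d = -1`). -/
def aResize (y : String) (c : Option ℕ) (d : ℤ) (a : RefExpr) : RefExpr :=
  aBumpO c (aLenShift y d a)

/-- The environment reached from `σ` by a statement with AST counter `c` that replaces the list
stored in `y` by `vs`. -/
def Env.resize (σ : Env) (y : String) (c : Option ℕ) (vs : List Val) : Env :=
  (σ.bump c).setVar y (.list vs)

section Resize

variable {σ : Env} {y : String} {us vs : List Val} {d : ℤ}

theorem Env.apply_vars_resize {α : Sort*} (f : Val → α) (hy : σ.vars y = .list us)
    (vs : List Val) (hf : f (.list us) = f (.list vs)) (c : Option ℕ) (z : String) :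
    f (σ.vars z) = f ((σ.resize y c vs).vars z) := by
  rw [← σ.vars_bump c] at hy ⊢
  exact apply_vars_setVar f (hy ▸ hf) z

theorem RefExpr.eval_aResize_var (hy : σ.vars y = .list us) (vs : List Val) (d : ℤ)
    (c : Option ℕ) (w z : String) :
    (aResize y c d (.var z)).eval σ w = ((σ.resize y c vs).vars z).asInt := by
  have hvar : aResize y c d (.var z) = .var z := by cases c <;> rfl
  rw [hvar]
  exact Env.apply_vars_resize Val.asInt hy vs rfl c z

theorem RefExpr.eval_aResize_idx (hy : σ.vars y = .list us) (vs : List Val) (d : ℤ)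
    (c : Option ℕ) (w z : String) :
    (aResize y c d (.idx (some z))).eval σ w = ((σ.resize y c vs).vars z).idxZ := by
  have hidx : aResize y c d (.idx (some z)) = .idx (some z) := by cases c <;> rfl
  rw [hidx]
  exact Env.apply_vars_resize Val.idxZ hy vs rfl c z

theorem RefExpr.eval_aResize_len (hy : σ.vars y = .list us)
    (hlen : (vs.length : ℤ) = us.length + d) (c : Option ℕ) (w z : String) :
    (aResize y c d (.len (some z))).eval σ w = ((σ.resize y c vs).vars z).lenZ := by
  obtain rfl | hz := eq_or_ne z y
  · cases c <;> simp [aResize, aLenShift, aBumpO, aBump, eval, Env.resize, Env.setVar, hy,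
      Val.lenZ, hlen]
  · cases c <;> simp [aResize, aLenShift, aBumpO, aBump, eval, Env.resize, Env.setVar,
      Env.vars_bump, hz]

theorem RefExpr.eval_aResize_cnt (σ : Env) (y : String) (vs : List Val) (d : ℤ) (c : Option ℕ)
    (w : String) (k : ℕ) :
    (aResize y c d (.cnt k)).eval σ w = (σ.resize y c vs).cnt k := by
  cases c with
  | none => rfl
  | some c =>
    obtain rfl | hk := eq_or_ne k c
    · simp [aResize, aLenShift, aBumpO, aBump, eval, Env.resize, Env.setVar, Env.bump]
    · simp [aResize, aLenShift, aBumpO, aBump, eval, Env.resize, Env.setVar, Env.bump, hk]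

-- `[w/self]` has to come first: when `w = y`, the atom `len(self)` must be shifted too.
theorem RefExpr.eval_mapAtoms_aResize_aSelf (hy : σ.vars y = .list us)
    (hlen : (vs.length : ℤ) = us.length + d) (c : Option ℕ) (w : String) :
    ∀ a : RefExpr, a.IsAtom →
      ((aSelf w a).mapAtoms (aResize y c d)).eval σ w = a.eval (σ.resize y c vs) w
  | .int _, _ => by cases c <;> rfl
  | .selfI, _ => eval_aResize_var hy vs d c w w
  | .var z, _ => eval_aResize_var hy vs d c w z
  | .len none, _ => eval_aResize_len hy hlen c w w
  | .len (some z), _ => eval_aResize_len hy hlen c w z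
  | .idx none, _ => eval_aResize_idx hy vs d c w w
  | .idx (some z), _ => eval_aResize_idx hy vs d c w z
  | .cnt k, _ => eval_aResize_cnt σ y vs d c w k

theorem rsat_mapE_aResize (hy : σ.vars y = .list us) (hlen : (vs.length : ℤ) = us.length + d)
    (c : Option ℕ) (w : String) (r : Refinement) :
    RSat σ w ((r.applySelf w).mapE (aResize y c d)) ↔ RSat (σ.resize y c vs) w r := by
  have hbool := Env.apply_vars_resize Val.asBool hy vs rfl c
  have hiter (z : String) :
      (∃ i, σ.vars w = .iter i z) ↔ ∃ i, (σ.resize y c vs).vars w = .iter i z :=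
    iff_of_eq (Env.apply_vars_resize (fun v => ∃ i, v = .iter i z) hy vs (by simp) c w)
  rw [Refinement.applySelf, Refinement.mapE_mapE]
  exact rsat_mapE (RefExpr.eval_mapAtoms_aResize_aSelf hy hlen c w) hbool hiter r

theorem ValHasBase.list_of_subset {β : BaseTy} (h : ValHasBase (.list us) β) (hvs : vs ⊆ us) :
    ValHasBase (.list vs) β := by
  cases h with
  | list _ β h => exact .list vs β fun v hv => h v (hvs hv)

theorem ValHasBase.vars_resize (hy : σ.vars y = .list us) (hvs : vs ⊆ us) (c : Option ℕ)
    (x : String) (β : BaseTy) (h : ValHasBase (σ.vars x) β) :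
    ValHasBase ((σ.resize y c vs).vars x) β := by
  obtain rfl | hx := eq_or_ne x y
  · simpa only [Env.resize, Env.setVar, Function.update_self] using (hy ▸ h).list_of_subset hvs
  · simpa only [Env.resize, Env.setVar, Function.update_of_ne hx, Env.vars_bump] using h

end Resize

theorem preservation_remove_general {Γ : Ctx} {σ σ' : Env} {y : String} {c : Option ℕ}
    (hwt : WellTyped Γ σ) (hsub : SubValid Γ (removeSubst y c))
    (hstep : Step σ (.remove c y) σ' .skip) :
    WellTyped Γ σ' := by
  cases hstep with
  | @remove _ _ _ vs v hy =>
    have hlen : (vs.length : ℤ) = (vs ++ [v]).length + -1 := by simp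
    exact hwt.of_subValid hsub (ValHasBase.vars_resize hy (List.subset_append_left vs [v]) c)
      fun x r => (rsat_mapE_aResize hy hlen c x r).1

/-- **Preservation for remove (the E-Remove case of Theorem 1).**
If `Γ ⊨ σ`, `y.remove()` type checks by rule `T-Remove`, `σ(y)` is a
nonempty list, and `⟨σ, y.remove()⟩ → ⟨σ', skip⟩` by rule `E-Remove`,
then `Γ ⊨ σ'`. -/
theorem preservation_remove (Γ : Ctx) (σ σ' : Env) (y : String) (c : ℕ)
    (hwt : WellTyped Γ σ)
    (hsub : SubValid Γ (removeSubst y (some c)))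
    (hne : ∃ vs v, σ.vars y = Val.list (vs ++ [v]))
    (hstep : Step σ (.remove (some c) y) σ' .skip) :
    WellTyped Γ σ' :=
  preservation_remove_general hwt hsub hstep

end QuantmBound
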